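/- Fix k ≥ 1, π ∈ (0,1), and 0 < Δ < log(2) / log(1 + π²/(2^k − 1)) (a threshold of order 2^k log(2)/π²), and for each n ≥ k let m = ⌈Δ n⌉. Then the minimax testing risk inf_ψ max( P_unif(ψ = 1), P_{planted,π}(ψ = 0) ), where the infimum runs over all functions ψ from m-tuples of k-flats of F_2^n to {0,1}, tends to 1/2 as n → ∞. -/

import Mathlib

open scoped BigOperators Classical
open Filter Topology

abbrev F2n (n : ℕ) := Fin n → ZMod 2

def IsFlat (n k : ℕ) (W : Set (F2n n)) : Prop :=
  ∃ A : AffineSubspace (ZMod 2) (F2n n),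
    (A : Set (F2n n)) = W ∧ W.Nonempty ∧ Module.finrank (ZMod 2) A.direction = n - k

def Flat (n k : ℕ) : Type := {W : Set (F2n n) // IsFlat n k W}

noncomputable instance (n k : ℕ) : Fintype (Flat n k) := by
  unfold Flat; exact Fintype.ofFinite _

noncomputable def q0 (n k : ℕ) : Flat n k → ℝ :=
  fun _ => (Fintype.card (Flat n k) : ℝ)⁻¹

noncomputable def qx (n k : ℕ) (x : F2n n) : Flat n k → ℝ :=
  fun W => if x ∈ W.1 then 0 else (Nat.card {W : Flat n k // x ∉ W.1} : ℝ)⁻¹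

noncomputable def prob {α : Type*} [Fintype α] (p : α → ℝ) (E : Set α) : ℝ :=
  ∑ a, if a ∈ E then p a else 0

noncomputable def expect {α : Type*} [Fintype α] (p : α → ℝ) (f : α → ℝ) : ℝ :=
  ∑ a, p a * f a

noncomputable def Punif (n k m : ℕ) : (Fin m → Flat n k) → ℝ :=
  fun V => ∏ j, q0 n k (V j)

noncomputable def Pplanted (n k m : ℕ) : (Fin m → Flat n k) → ℝ :=
  fun V => ((2:ℝ)^n)⁻¹ * ∑ x : F2n n, ∏ j, qx n k x (V j)

noncomputable def Z (n k m : ℕ) (V : Fin m → Flat n k) : ℕ :=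
  Nat.card {x : F2n n // ∀ j, x ∉ (V j).1}

noncomputable def satCount (n k m : ℕ) (V : Fin m → Flat n k) (x : F2n n) : ℕ :=
  Nat.card {j : Fin m // x ∉ (V j).1}

noncomputable def maxSat (n k m : ℕ) (V : Fin m → Flat n k) : ℕ :=
  Finset.univ.sup (fun x : F2n n => satCount n k m V x)

noncomputable def qxpi (n k : ℕ) (x : F2n n) (π : ℝ) : Flat n k → ℝ :=
  fun W => (1 - π) * q0 n k W + π * qx n k x W

noncomputable def Pplantedpi (n k m : ℕ) (π : ℝ) : (Fin m → Flat n k) → ℝ :=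
  fun V => ((2:ℝ)^n)⁻¹ * ∑ x : F2n n, ∏ j, qxpi n k x π (V j)

noncomputable def DeltaK (k : ℕ) : ℝ :=
  Real.log (1/2) / Real.log (1 - ((2:ℝ)^k)⁻¹)


lemma isFlat_image {n k : ℕ} (e : F2n n ≃ᵃ[ZMod 2] F2n n) {W : Set (F2n n)}
    (h : IsFlat n k W) : IsFlat n k (e '' W) := by
  obtain ⟨A, rfl, hne, hd⟩ := h
  refine ⟨A.map e.toAffineMap, by simp, hne.image _, ?_⟩
  rw [AffineSubspace.map_direction, ← hd]
  exact LinearEquiv.finrank_map_eq e.linear A.direction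

noncomputable def flatEquiv {n k : ℕ} (e : F2n n ≃ᵃ[ZMod 2] F2n n) : Flat n k ≃ Flat n k where
  toFun W := ⟨e '' W.1, isFlat_image e W.2⟩
  invFun W := ⟨e.symm '' W.1, isFlat_image e.symm W.2⟩
  left_inv W := by
    apply Subtype.ext
    simp [Set.preimage_image_eq _ e.injective]
  right_inv W := by
    apply Subtype.ext
    simp [Set.image_preimage_eq _ e.surjective]

noncomputable def c2 (n k : ℕ) (x y : F2n n) : ℝ :=
  ∑ W : Flat n k, if x ∈ W.1 ∧ y ∈ W.1 then 1 else 0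

lemma c2_equiv {n k : ℕ} (e : F2n n ≃ᵃ[ZMod 2] F2n n) (x y : F2n n) :
    c2 n k (e x) (e y) = c2 n k x y := by
  unfold c2
  rw [← Equiv.sum_comp (flatEquiv e)]
  refine Finset.sum_congr rfl fun W _ => ?_
  have h : ∀ z, e z ∈ (flatEquiv e W).1 ↔ z ∈ W.1 := fun z => by
    change e z ∈ e '' W.1 ↔ z ∈ W.1
    simp
  simp only [h]

lemma exists_lin {n : ℕ} {u v : F2n n} (hu : u ≠ 0) (hv : v ≠ 0) :
    ∃ g : F2n n ≃ₗ[ZMod 2] F2n n, g u = v := by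
  let f := (LinearEquiv.toSpanNonzeroSingleton (ZMod 2) _ u hu).symm ≪≫ₗ
    (LinearEquiv.toSpanNonzeroSingleton (ZMod 2) _ v hv)
  obtain ⟨g, hg⟩ := Submodule.exists_linearEquiv_restrict_eq f
  refine ⟨g, ?_⟩
  have := hg ⟨u, Submodule.mem_span_singleton_self u⟩
  rw [← this]
  have h1 : (LinearEquiv.toSpanNonzeroSingleton (ZMod 2) (F2n n) u hu).symm
      ⟨u, Submodule.mem_span_singleton_self u⟩ = 1 := by
    rw [LinearEquiv.symm_apply_eq]
    apply Subtype.ext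
    simp
  simp [f, h1]

lemma exists_aff {n : ℕ} {x y x' y' : F2n n} (h : x ≠ y) (h' : x' ≠ y') :
    ∃ e : F2n n ≃ᵃ[ZMod 2] F2n n, e x = x' ∧ e y = y' := by
  obtain ⟨g, hg⟩ := exists_lin (sub_ne_zero.2 h.symm) (sub_ne_zero.2 h'.symm)
  refine ⟨(AffineEquiv.constVAdd (ZMod 2) (F2n n) (-x)).trans
    (g.toAffineEquiv.trans (AffineEquiv.constVAdd (ZMod 2) (F2n n) x')), ?_, ?_⟩
  · simp
  · have : -x + y = y - x := by abel
    simp [this, hg]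

lemma flat_card {n k : ℕ} (W : Flat n k) :
    (∑ x : F2n n, if x ∈ W.1 then (1:ℝ) else 0) = 2 ^ (n - k) := by
  obtain ⟨_, A, rfl, ⟨p, hp⟩, hd⟩ := W
  have h1 : Fintype.card A.direction = 2 ^ (n - k) := by
    rw [Module.card_eq_pow_finrank (K := ZMod 2), hd, ZMod.card]
  rw [← Equiv.sum_comp (Equiv.addRight p)]
  have h2 : ∀ x : F2n n, Equiv.addRight p x ∈ (A : Set (F2n n)) ↔ x ∈ A.direction := fun x => by
    simpa using AffineSubspace.vadd_mem_iff_mem_direction x hp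
  simp only [h2]
  rw [Finset.sum_boole, ← Fintype.card_subtype]
  have h3 : Fintype.card {x // x ∈ A.direction} = 2 ^ (n - k) := by
    rw [← h1]
  exact_mod_cast h3

lemma flat_nonempty (n k : ℕ) : Nonempty (Flat n k) := by
  have : n - k ≤ Module.finrank (ZMod 2) (F2n n) := by simp
  obtain ⟨f, hf⟩ := exists_linearIndependent_of_le_finrank this
  let S := Submodule.span (ZMod 2) (Set.range f)
  refine ⟨⟨(S.toAffineSubspace : Set (F2n n)), S.toAffineSubspace, rfl, ⟨0, by simp⟩, ?_⟩⟩
  rw [Submodule.toAffineSubspace_direction]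
  simpa using finrank_span_eq_card hf

lemma c1_eq {n k : ℕ} (hk : k ≤ n) (x : F2n n) :
    c2 n k x x = Fintype.card (Flat n k) * ((2:ℝ)^k)⁻¹ := by
  have h1 : ∀ y, c2 n k y y = c2 n k x x := fun y => by
    have := c2_equiv (k := k) (AffineEquiv.constVAdd (ZMod 2) (F2n n) (y - x)) x x
    simpa using this
  have h2 : ∑ y : F2n n, c2 n k y y = 2 ^ n * c2 n k x x := by
    rw [Finset.sum_congr rfl fun y _ => h1 y]
    simp [ZMod.card]
  have h3 : ∑ y : F2n n, c2 n k y y = Fintype.card (Flat n k) * 2 ^ (n - k) := by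
    unfold c2
    rw [Finset.sum_comm]
    simp only [and_self]
    rw [Finset.sum_congr rfl fun W _ => flat_card W]
    simp
  have h4 : (2:ℝ) ^ n = 2 ^ (n-k) * 2 ^ k := by rw [← pow_add, Nat.sub_add_cancel hk]
  rw [h2, h4] at h3
  have : (0:ℝ) < 2 ^ (n-k) := by positivity
  have : (0:ℝ) < 2 ^ k := by positivity
  field_simp
  apply mul_left_cancel₀ (a := (2:ℝ) ^ (n-k)) (by positivity)
  linarith

lemma c2_le {n k : ℕ} (hk : k ≤ n) {x y : F2n n} (hxy : x ≠ y) :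
    c2 n k x y ≤ Fintype.card (Flat n k) * (((2:ℝ)^k)⁻¹)^2 := by
  have h1 : ∀ x' y', x' ≠ y' → c2 n k x' y' = c2 n k x y := fun x' y' h => by
    obtain ⟨e, rfl, rfl⟩ := exists_aff hxy h
    exact c2_equiv e x y
  have h2 : ∑ x' : F2n n, ∑ y' : F2n n, c2 n k x' y'
      = 2 ^ n * (2 ^ n - 1) * c2 n k x y + 2 ^ n * (Fintype.card (Flat n k) * ((2:ℝ)^k)⁻¹) := by
    have : ∀ x' : F2n n, ∑ y' : F2n n, c2 n k x' y'
       = (2 ^ n - 1) * c2 n k x y + (Fintype.card (Flat n k) * ((2:ℝ)^k)⁻¹) := fun x' => by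
      rw [← Finset.sum_erase_add _ _ (Finset.mem_univ x'), c1_eq hk]
      rw [Finset.sum_congr rfl fun y' hy' => h1 x' y' (Finset.ne_of_mem_erase hy').symm]
      simp [Finset.card_erase_of_mem, ZMod.card, Nat.cast_sub Nat.one_le_two_pow]
    rw [Finset.sum_congr rfl fun x' _ => this x']
    simp [ZMod.card]
    ring
  have h3 : ∑ x' : F2n n, ∑ y' : F2n n, c2 n k x' y'
      = Fintype.card (Flat n k) * (2 ^ (n - k)) ^ 2 := by
    have : ∀ x' y' : F2n n, c2 n k x' y' = ∑ W : Flat n k,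
        (if x' ∈ W.1 then (1:ℝ) else 0) * (if y' ∈ W.1 then (1:ℝ) else 0) := fun x' y' => by
      unfold c2
      refine Finset.sum_congr rfl fun W _ => ?_
      by_cases a : x' ∈ W.1 <;> by_cases b : y' ∈ W.1 <;> simp [a, b]
    simp only [this]
    simp_rw [Finset.sum_comm (s := (Finset.univ : Finset (F2n n))) (t := (Finset.univ : Finset (Flat n k)))]
    simp_rw [← Finset.mul_sum, ← Finset.sum_mul, flat_card]
    rw [Finset.sum_const, Finset.card_univ, nsmul_eq_mul]
    ring
  have hn : n ≠ 0 := by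
    rintro rfl
    exact hxy (Subsingleton.elim _ _)
  have h4 : (2:ℝ) ^ n = 2 ^ (n-k) * 2 ^ k := by rw [← pow_add, Nat.sub_add_cancel hk]
  rw [h2, h4] at h3
  have h5 : (1:ℝ) < 2 ^ (n-k) * 2 ^ k := by rw [← h4]; exact one_lt_pow₀ (by norm_num) hn
  generalize (2:ℝ) ^ (n-k) = a at *
  have h6 : (1:ℝ) ≤ 2 ^ k := one_le_pow₀ (by norm_num)
  generalize (2:ℝ) ^ k = b at *
  have hb : 0 < b := by linarith
  have ha : 0 < a := by
    by_contra h
    nlinarith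
  have hN : (0:ℝ) ≤ Fintype.card (Flat n k) := by positivity
  generalize (Fintype.card (Flat n k) : ℝ) = N at *
  have h7 : b * (a * b - 1) * c2 n k x y = N * (a - 1) := by
    apply mul_left_cancel₀ ha.ne'
    field_simp at h3
    linear_combination a * h3
  have h8 : c2 n k x y = N * (a - 1) / (b * (a * b - 1)) := by
    rw [eq_div_iff (by nlinarith [mul_pos hb (sub_pos.2 h5)])]
    linarith
  rw [h8, div_le_iff₀ (mul_pos hb (sub_pos.2 h5))]
  have : N * b⁻¹ ^ 2 * (b * (a * b - 1)) = N * (a - b⁻¹) := by field_simp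
  rw [this]
  apply mul_le_mul_of_nonneg_left _ hN
  linarith [inv_le_one_of_one_le₀ h6]

lemma sum_pi_prod {α : Type*} [Fintype α] (m : ℕ) (g : α → ℝ) :
    ∑ V : Fin m → α, ∏ j, g (V j) = (∑ a, g a) ^ m := by
  have := Finset.sum_prod_piFinset (ι := Fin m) (Finset.univ : Finset α) (fun _ a => g a)
  simpa using this

lemma chi_bound {α X : Type*} [Fintype α] [Fintype X] [Nonempty X] (m : ℕ)
    (q : α → ℝ) (hq : ∀ a, 0 ≤ q a) (hq1 : ∑ a, q a = 1)
    (r : X → α → ℝ) (hr : ∀ x a, 0 ≤ r x a) (hr1 : ∀ x, ∑ a, q a * r x a = 1)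
    (ρ : ℝ) (h1 : ∀ x, ∑ a, q a * r x a * r x a ≤ ρ)
    (h2 : ∀ x y, x ≠ y → ∑ a, q a * r x a * r y a ≤ 1) :
    (∑ V : Fin m → α, ((Fintype.card X : ℝ)⁻¹ * ∑ x, ∏ j, (q (V j) * r x (V j))) = 1) ∧
    ∑ V : Fin m → α, |((Fintype.card X : ℝ)⁻¹ * ∑ x, ∏ j, (q (V j) * r x (V j)))
      - ∏ j, q (V j)| ≤ √((Fintype.card X : ℝ)⁻¹ * ρ ^ m) := by
  have hX : (0:ℝ) < Fintype.card X := by exact_mod_cast Fintype.card_pos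
  set M : ℝ := (Fintype.card X : ℝ) with hM
  have hQ1 : ∑ V : Fin m → α, (M⁻¹ * ∑ x, ∏ j, (q (V j) * r x (V j))) = 1 := by
    rw [← Finset.mul_sum, Finset.sum_comm]
    rw [Finset.sum_congr rfl fun x _ => (sum_pi_prod m (fun a => q a * r x a)).trans
      (by rw [hr1])]
    simp [← hM, hX.ne']
  refine ⟨hQ1, ?_⟩
  let P : (Fin m → α) → ℝ := fun V => ∏ j, q (V j)
  let L : (Fin m → α) → ℝ := fun V => M⁻¹ * ∑ x, ∏ j, r x (V j)
  have hP0 : ∀ V, 0 ≤ P V := fun V => Finset.prod_nonneg fun j _ => hq _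
  have hP1 : ∑ V, P V = 1 := by
    simp only [P]; rw [sum_pi_prod, hq1, one_pow]
  have hQ : ∀ V : Fin m → α, (M⁻¹ * ∑ x, ∏ j, (q (V j) * r x (V j))) = P V * L V := fun V => by
    simp only [P, L, Finset.prod_mul_distrib, ← Finset.mul_sum]
    ring
  simp_rw [hQ] at hQ1 ⊢
  have hL2 : ∑ V, P V * L V ^ 2 ≤ 1 + M⁻¹ * ρ ^ m := by
    have e1 : ∀ V, P V * L V ^ 2 = (M⁻¹)^2 * ∑ x, ∑ y, ∏ j, (q (V j) * r x (V j) * r y (V j)) := by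
      intro V
      simp only [P, L, Finset.prod_mul_distrib]
      simp_rw [← Finset.mul_sum, ← Finset.sum_mul, ← Finset.mul_sum]
      ring
    simp_rw [e1]
    rw [← Finset.mul_sum, Finset.sum_comm]
    have e2 : ∀ x : X, ∑ V : Fin m → α, ∑ y, ∏ j, (q (V j) * r x (V j) * r y (V j))
        ≤ M + ρ ^ m := by
      intro x
      rw [Finset.sum_comm]
      have e3 : ∀ y : X, ∑ V : Fin m → α, ∏ j, (q (V j) * r x (V j) * r y (V j))
          ≤ 1 + if y = x then ρ ^ m else 0 := by
        intro y
        rw [sum_pi_prod m (fun a => q a * r x a * r y a)]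
        have h0 : 0 ≤ ∑ a, q a * r x a * r y a :=
          Finset.sum_nonneg fun a _ => mul_nonneg (mul_nonneg (hq _) (hr _ _)) (hr _ _)
        by_cases hxy : y = x
        · subst hxy
          have := pow_le_pow_left₀ h0 (h1 y) m
          simp only [if_true]
          linarith
        · simp only [hxy, if_false, add_zero]
          exact pow_le_one₀ h0 (h2 x y (Ne.symm hxy))
      refine (Finset.sum_le_sum fun y _ => e3 y).trans ?_
      rw [Finset.sum_add_distrib]
      simp [← hM]
    have e4 := Finset.sum_le_sum (s := Finset.univ) fun x _ => e2 x
    rw [Finset.sum_const, Finset.card_univ, nsmul_eq_mul, ← hM] at e4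
    refine (mul_le_mul_of_nonneg_left e4 (by positivity)).trans (le_of_eq ?_)
    field_simp
  have hchi : ∑ V, P V * (L V - 1) ^ 2 ≤ M⁻¹ * ρ ^ m := by
    have : ∑ V, P V * (L V - 1) ^ 2
        = ∑ V, P V * L V ^ 2 - 2 * ∑ V, P V * L V + ∑ V, P V := by
      rw [Finset.mul_sum, ← Finset.sum_sub_distrib, ← Finset.sum_add_distrib]
      exact Finset.sum_congr rfl fun V _ => by ring
    rw [this, hQ1, hP1]
    linarith
  apply Real.le_sqrt_of_sq_le
  have cs := Finset.sum_mul_sq_le_sq_mul_sq Finset.univ (fun V => √(P V))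
    (fun V => √(P V) * |L V - 1|)
  have e5 : ∀ V, √(P V) * (√(P V) * |L V - 1|) = |P V * L V - ∏ j, q (V j)| := fun V => by
    change _ = |P V * L V - P V|
    rw [← mul_assoc, Real.mul_self_sqrt (hP0 V), ← mul_sub_one, abs_mul, abs_of_nonneg (hP0 V)]
  have e6 : ∀ V, (√(P V) * |L V - 1|) ^ 2 = P V * (L V - 1) ^ 2 := fun V => by
    rw [mul_pow, Real.sq_sqrt (hP0 V), sq_abs]
  simp_rw [e5, e6, Real.sq_sqrt (hP0 _), hP1, one_mul] at cs
  exact cs.trans hchi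

lemma test_bound {α : Type*} [Fintype α] [Nonempty α] (P Q : α → ℝ)
    (hP : ∀ a, P a = (Fintype.card α : ℝ)⁻¹) (hQ1 : ∑ a, Q a = 1) (δ : ℝ)
    (hδ : ∑ a, |Q a - P a| ≤ δ) :
    1/2 - δ/2 ≤ (⨅ ψ : α → Bool, max (prob P {V | ψ V = true}) (prob Q {V | ψ V = false})) ∧
    (⨅ ψ : α → Bool, max (prob P {V | ψ V = true}) (prob Q {V | ψ V = false}))
      ≤ 1/2 + (Fintype.card α : ℝ)⁻¹ + δ := by
  have hN : (0:ℝ) < Fintype.card α := by exact_mod_cast Fintype.card_pos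
  have hδ0 : 0 ≤ δ := (Finset.sum_nonneg fun a _ => abs_nonneg _).trans hδ
  have hlow : ∀ ψ : α → Bool, 1/2 - δ/2 ≤
      max (prob P {V | ψ V = true}) (prob Q {V | ψ V = false}) := by
    intro ψ
    have h1 : 1 - (prob P {V | ψ V = true} + prob Q {V | ψ V = false}) ≤ δ := by
      refine le_trans ?_ hδ
      unfold prob
      rw [← hQ1, ← Finset.sum_add_distrib, ← Finset.sum_sub_distrib]
      refine Finset.sum_le_sum fun a _ => ?_
      cases h : ψ a
      · simp [h]
      · simp [h, le_abs_self]
    rcases le_total (prob P {V | ψ V = true}) (prob Q {V | ψ V = false}) with h | h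
    · rw [max_eq_right h]; linarith
    · rw [max_eq_left h]; linarith
  refine ⟨le_ciInf hlow, ?_⟩
  obtain ⟨s, hs, hsc⟩ := Finset.exists_subset_card_eq
    (s := (Finset.univ : Finset α)) (n := Fintype.card α / 2)
    (by rw [Finset.card_univ]; exact Nat.div_le_self _ _)
  refine (ciInf_le ⟨1/2 - δ/2, by rintro _ ⟨ψ, rfl⟩; exact hlow ψ⟩
    (fun a => decide (a ∈ s))).trans ?_
  have hp1 : prob P {V | decide (V ∈ s) = true}
      = (Fintype.card α : ℝ)⁻¹ * (Fintype.card α / 2 : ℕ) := by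
    unfold prob
    rw [← hsc]
    simp [hP, Finset.sum_ite_mem, mul_comm]
  have hp0 : prob P {V | decide (V ∈ s) = true} + prob P {V | decide (V ∈ s) = false} = 1 := by
    unfold prob
    rw [← Finset.sum_add_distrib]
    refine Eq.trans (Finset.sum_congr rfl (g := fun _ => (Fintype.card α : ℝ)⁻¹) fun a _ => ?_) ?_
    · by_cases h : a ∈ s <;> simp [h, hP]
    · simp [hN.ne']
  have hq : prob Q {V | decide (V ∈ s) = false} ≤ prob P {V | decide (V ∈ s) = false} + δ := by
    rw [← sub_le_iff_le_add']
    refine le_trans ?_ hδ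
    unfold prob
    rw [← Finset.sum_sub_distrib]
    refine Finset.sum_le_sum fun a _ => ?_
    by_cases h : a ∈ s <;> simp [h, le_abs_self]
  have hd1 : ((Fintype.card α / 2 : ℕ) : ℝ) ≤ Fintype.card α / 2 := by
    exact Nat.cast_div_le
  have hd2 : (Fintype.card α : ℝ) / 2 - 1 ≤ (Fintype.card α / 2 : ℕ) := by
    have : Fintype.card α ≤ 2 * (Fintype.card α / 2) + 2 := by omega
    have : (Fintype.card α : ℝ) ≤ 2 * (Fintype.card α / 2 : ℕ) + 2 := by exact_mod_cast this
    linarith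
  have hi : 0 < (Fintype.card α : ℝ)⁻¹ := by positivity
  have b1 := mul_le_mul_of_nonneg_left hd1 hi.le
  have b2 := mul_le_mul_of_nonneg_left hd2 hi.le
  have b3 : (Fintype.card α : ℝ)⁻¹ * (Fintype.card α / 2) = 1/2 := by field_simp
  rw [b3] at b1
  rw [mul_sub, b3] at b2
  apply max_le <;> linarith

noncomputable def rr (n k : ℕ) (π : ℝ) (x : F2n n) (W : Flat n k) : ℝ :=
  1 - π + π * ((1 - (if x ∈ W.1 then 1 else 0)) * (1 - ((2:ℝ)^k)⁻¹)⁻¹)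

lemma p_lt {k : ℕ} (hk : 1 ≤ k) : ((2:ℝ)^k)⁻¹ < 1 :=
  inv_lt_one_of_one_lt₀ (one_lt_pow₀ (by norm_num) (by omega))

lemma c1_sum {n k : ℕ} (x : F2n n) :
    ∑ W : Flat n k, (if x ∈ W.1 then (1:ℝ) else 0) = c2 n k x x := by simp [c2]

lemma c2_sum {n k : ℕ} (x y : F2n n) :
    ∑ W : Flat n k, (if x ∈ W.1 then (1:ℝ) else 0) * (if y ∈ W.1 then (1:ℝ) else 0)
      = c2 n k x y := by
  unfold c2
  refine Finset.sum_congr rfl fun W _ => ?_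
  by_cases a : x ∈ W.1 <;> by_cases b : y ∈ W.1 <;> simp [a, b]

lemma N_pos (n k : ℕ) : (0:ℝ) < Fintype.card (Flat n k) := by
  have := flat_nonempty n k
  exact_mod_cast Fintype.card_pos

lemma qxpi_eq {n k : ℕ} (hkn : k ≤ n) (π : ℝ) (x : F2n n) (W : Flat n k) :
    qxpi n k x π W = q0 n k W * rr n k π x W := by
  have hN := N_pos n k
  have hc : (Nat.card {W : Flat n k // x ∉ W.1} : ℝ)
      = Fintype.card (Flat n k) * (1 - ((2:ℝ)^k)⁻¹) := by
    have h1 := c1_sum (k := k) x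
    rw [c1_eq hkn] at h1
    have h2 : ∑ W : Flat n k, (if x ∉ W.1 then (1:ℝ) else 0)
        = Nat.card {W : Flat n k // x ∉ W.1} := by
      rw [Finset.sum_boole, Nat.card_eq_fintype_card, Fintype.card_subtype]
    rw [← h2, mul_sub, ← h1, mul_one]
    rw [eq_sub_iff_add_eq, ← Finset.sum_add_distrib]
    rw [Finset.sum_congr rfl (g := fun _ => (1:ℝ)) fun W _ => by
      by_cases h : x ∈ W.1 <;> simp [h]]
    simp
  unfold qxpi qx rr q0
  rw [hc, mul_inv]
  by_cases h : x ∈ W.1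
  · simp [h]; ring
  · simp [h]; ring

lemma rr_nonneg {n k : ℕ} (hk : 1 ≤ k) {π : ℝ} (h0 : 0 < π) (h1 : π < 1) (x : F2n n)
    (W : Flat n k) : 0 ≤ rr n k π x W := by
  have := p_lt hk
  have : 0 ≤ (1 - ((2:ℝ)^k)⁻¹)⁻¹ := inv_nonneg.2 (by linarith)
  unfold rr
  by_cases h : x ∈ W.1
  · simp [h]; linarith
  · simp only [h, if_false, sub_zero, one_mul]
    have := mul_nonneg h0.le this
    linarith

lemma rr_sum {n k : ℕ} (hk : 1 ≤ k) (hkn : k ≤ n) (π : ℝ) (x : F2n n) :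
    ∑ W : Flat n k, q0 n k W * rr n k π x W = 1 := by
  have hN := N_pos n k
  have h1 := c1_sum (k := k) x
  rw [c1_eq hkn] at h1
  have hp := p_lt hk
  unfold q0 rr
  rw [← Finset.mul_sum, Finset.sum_add_distrib, ← Finset.mul_sum, ← Finset.sum_mul]
  have h3 : ∑ W : Flat n k, (1 - (if x ∈ W.1 then (1:ℝ) else 0))
      = Fintype.card (Flat n k) - Fintype.card (Flat n k) * ((2:ℝ)^k)⁻¹ := by
    rw [Finset.sum_sub_distrib, h1]; simp
  rw [h3]
  simp only [Finset.sum_const, Finset.card_univ, nsmul_eq_mul]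
  generalize ((2:ℝ)^k)⁻¹ = p at *
  have : 1 - p ≠ 0 := by linarith
  field_simp
  ring

lemma rr_sum2 {n k : ℕ} (hk : 1 ≤ k) (hkn : k ≤ n) (π : ℝ) (x y : F2n n) :
    ∑ W : Flat n k, q0 n k W * rr n k π x W * rr n k π y W
      = 1 + π ^ 2 * ((Fintype.card (Flat n k) : ℝ)⁻¹ * c2 n k x y - (((2:ℝ)^k)⁻¹)^2)
        / (1 - ((2:ℝ)^k)⁻¹)^2 := by
  have hN := N_pos n k
  have h1 := c1_sum (k := k) x
  have h1' := c1_sum (k := k) y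
  have h2 := c2_sum (k := k) x y
  rw [c1_eq hkn] at h1 h1'
  have hp := p_lt hk
  unfold q0 rr
  generalize ((2:ℝ)^k)⁻¹ = p at *
  have hp' : 1 - p ≠ 0 := by linarith
  have e : ∀ W : Flat n k, (Fintype.card (Flat n k) : ℝ)⁻¹ *
      (1 - π + π * ((1 - (if x ∈ W.1 then 1 else 0)) * (1 - p)⁻¹)) *
      (1 - π + π * ((1 - (if y ∈ W.1 then 1 else 0)) * (1 - p)⁻¹))
      = (Fintype.card (Flat n k) : ℝ)⁻¹ * ((1 - π + π * (1 - p)⁻¹)^2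
        - (1 - π + π * (1 - p)⁻¹) * (π * (1-p)⁻¹) * (if x ∈ W.1 then 1 else 0)
        - (1 - π + π * (1 - p)⁻¹) * (π * (1-p)⁻¹) * (if y ∈ W.1 then 1 else 0)
        + (π * (1-p)⁻¹)^2 * ((if x ∈ W.1 then 1 else 0) * (if y ∈ W.1 then 1 else 0))) := by
    intro W; ring
  rw [Finset.sum_congr rfl fun W _ => e W, ← Finset.mul_sum, Finset.sum_add_distrib,
    Finset.sum_sub_distrib, Finset.sum_sub_distrib, ← Finset.mul_sum, ← Finset.mul_sum,
    ← Finset.mul_sum, h1, h1', h2]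
  simp only [Finset.sum_const, Finset.card_univ, nsmul_eq_mul]
  field_simp
  ring

lemma main_bound {n k : ℕ} (hk : 1 ≤ k) (hkn : k ≤ n) {π : ℝ} (h0 : 0 < π) (h1 : π < 1) (m : ℕ) :
    1/2 - √(((2:ℝ)^n)⁻¹ * (1 + π^2 / ((2:ℝ)^k - 1)) ^ m)/2 ≤
      (⨅ ψ : (Fin m → Flat n k) → Bool, max (prob (Punif n k m) {V | ψ V = true})
        (prob (Pplantedpi n k m π) {V | ψ V = false})) ∧
    (⨅ ψ : (Fin m → Flat n k) → Bool, max (prob (Punif n k m) {V | ψ V = true})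
        (prob (Pplantedpi n k m π) {V | ψ V = false}))
      ≤ 1/2 + ((2:ℝ)^m)⁻¹ + √(((2:ℝ)^n)⁻¹ * (1 + π^2 / ((2:ℝ)^k - 1)) ^ m) := by
  have hN := N_pos n k
  have hp := p_lt hk
  have := flat_nonempty n k
  have hX : (Fintype.card (F2n n) : ℝ) = 2 ^ n := by simp [ZMod.card]
  have h2k : (1:ℝ) < 2 ^ k := one_lt_pow₀ (by norm_num) (by omega)
  have hb := chi_bound (X := F2n n) m (q0 n k) (fun _ => inv_nonneg.2 hN.le)
    (by unfold q0; simp [hN.ne']) (rr n k π) (rr_nonneg hk h0 h1) (rr_sum hk hkn π)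
    (1 + π^2 / ((2:ℝ)^k - 1))
    (fun x => by
      rw [rr_sum2 hk hkn, c1_eq hkn]
      apply le_of_eq
      have : (2:ℝ)^k - 1 ≠ 0 := by linarith
      generalize (2:ℝ)^k = b at *
      have : b ≠ 0 := by linarith
      have e : 1 - b⁻¹ = (b-1)/b := by field_simp
      rw [e]
      field_simp)
    (fun x y hxy => by
      rw [rr_sum2 hk hkn]
      have := c2_le hkn hxy
      have : (Fintype.card (Flat n k) : ℝ)⁻¹ * c2 n k x y ≤ (((2:ℝ)^k)⁻¹)^2 := by
        rw [inv_mul_le_iff₀ hN]; exact this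
      have : π ^ 2 * ((Fintype.card (Flat n k) : ℝ)⁻¹ * c2 n k x y - (((2:ℝ)^k)⁻¹)^2)
        / (1 - ((2:ℝ)^k)⁻¹)^2 ≤ 0 := by
        apply div_nonpos_of_nonpos_of_nonneg _ (sq_nonneg _)
        exact mul_nonpos_of_nonneg_of_nonpos (sq_nonneg _) (by linarith)
      linarith)
  rw [hX] at hb
  have hPp : ∀ V : Fin m → Flat n k, ((2:ℝ)^n)⁻¹ * ∑ x, ∏ j, (q0 n k (V j) * rr n k π x (V j))
      = Pplantedpi n k m π V := fun V => by
    unfold Pplantedpi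
    simp_rw [qxpi_eq hkn]
  simp_rw [hPp] at hb
  have hcard : (Fintype.card (Fin m → Flat n k) : ℝ) = (Fintype.card (Flat n k) : ℝ) ^ m := by
    simp
  have ht := test_bound (Punif n k m) (Pplantedpi n k m π)
    (fun V => by rw [hcard]; simp [Punif, q0]) hb.1 _ hb.2
  refine ⟨ht.1, ht.2.trans ?_⟩
  have hN2 : (2:ℝ) ≤ Fintype.card (Flat n k) := by
    have e := c1_eq (k := k) hkn 0
    have e1 : (1:ℝ) ≤ c2 n k 0 0 := by
      have : 0 < c2 n k 0 0 := by rw [e]; positivity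
      have e2 : c2 n k 0 0 = ((Finset.univ.filter fun W : Flat n k => (0:F2n n) ∈ W.1).card : ℝ) := by
        simp [c2]
      rw [e2] at this ⊢
      exact_mod_cast this
    have e3 : (2:ℝ) ≤ 2 ^ k := le_self_pow₀ (by norm_num) (by omega)
    have e4 : (Fintype.card (Flat n k) : ℝ) = c2 n k 0 0 * 2 ^ k := by rw [e]; field_simp
    rw [e4]
    nlinarith
  have : ((Fintype.card (Fin m → Flat n k) : ℝ))⁻¹ ≤ ((2:ℝ)^m)⁻¹ := by
    rw [hcard]
    exact inv_anti₀ (by positivity) (pow_le_pow_left₀ (by norm_num) hN2 m)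
  linarith

theorem stmt18 (k : ℕ) (hk : 1 ≤ k) (π : ℝ) (hπ0 : 0 < π) (hπ1 : π < 1)
    (Δ : ℝ) (hΔ0 : 0 < Δ)
    (hΔ : Δ < Real.log 2 / Real.log (1 + π^2 / ((2:ℝ)^k - 1))) :
    Tendsto (fun n : ℕ =>
        ⨅ ψ : (Fin ⌈Δ * (n:ℝ)⌉₊ → Flat n k) → Bool,
          max (prob (Punif n k ⌈Δ * (n:ℝ)⌉₊) {V | ψ V = true})
              (prob (Pplantedpi n k ⌈Δ * (n:ℝ)⌉₊ π) {V | ψ V = false}))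
      atTop (nhds (1/2)) := by
  have h2k : (1:ℝ) < 2 ^ k := one_lt_pow₀ (by norm_num) (by omega)
  set ρ : ℝ := 1 + π^2 / ((2:ℝ)^k - 1) with hρ
  have hρ1 : 1 < ρ := by
    have : 0 < π^2 / ((2:ℝ)^k - 1) := div_pos (by positivity) (by linarith)
    linarith
  have hlog : 0 < Real.log ρ := Real.log_pos hρ1
  have hneg : Δ * Real.log ρ - Real.log 2 < 0 := by
    rw [lt_div_iff₀ hlog] at hΔ
    linarith
  have hchi : Tendsto (fun n : ℕ => ((2:ℝ)^n)⁻¹ * ρ ^ ⌈Δ * (n:ℝ)⌉₊) atTop (nhds 0) := by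
    have hg : Tendsto (fun n : ℕ => ρ * (Real.exp (Δ * Real.log ρ - Real.log 2)) ^ n)
        atTop (nhds 0) := by
      have := tendsto_pow_atTop_nhds_zero_of_lt_one (Real.exp_pos _).le (Real.exp_zero ▸ Real.exp_lt_exp.2 hneg)
      simpa using this.const_mul ρ
    refine squeeze_zero (fun n => by positivity) (fun n => ?_) hg
    have hc : (⌈Δ * (n:ℝ)⌉₊ : ℝ) ≤ Δ * n + 1 := (Nat.ceil_lt_add_one (by positivity)).le
    have e1 : ρ ^ ⌈Δ * (n:ℝ)⌉₊ ≤ ρ * Real.exp (n * (Δ * Real.log ρ)) := by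
      rw [← Real.rpow_natCast]
      refine (Real.rpow_le_rpow_of_exponent_le hρ1.le hc).trans (le_of_eq ?_)
      rw [Real.rpow_add (by linarith), Real.rpow_one, Real.rpow_def_of_pos (by linarith), mul_comm]
      congr 2
      ring
    have e2 : Real.exp (Δ * Real.log ρ - Real.log 2) ^ n
        = ((2:ℝ)^n)⁻¹ * Real.exp (n * (Δ * Real.log ρ)) := by
      rw [Real.exp_sub, Real.exp_log (by norm_num), div_pow, ← Real.exp_nat_mul]
      field_simp
    rw [e2]
    calc _ ≤ ((2:ℝ)^n)⁻¹ * (ρ * Real.exp (n * (Δ * Real.log ρ))) :=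
          mul_le_mul_of_nonneg_left e1 (by positivity)
      _ = _ := by ring
  have hs : Tendsto (fun n : ℕ => √(((2:ℝ)^n)⁻¹ * ρ ^ ⌈Δ * (n:ℝ)⌉₊)) atTop (nhds 0) := by
    simpa using hchi.sqrt
  have hm : Tendsto (fun n : ℕ => ((2:ℝ) ^ ⌈Δ * (n:ℝ)⌉₊)⁻¹) atTop (nhds 0) := by
    have h1 : Tendsto (fun n : ℕ => ⌈Δ * (n:ℝ)⌉₊) atTop atTop :=
      tendsto_nat_ceil_atTop.comp (tendsto_natCast_atTop_atTop.const_mul_atTop hΔ0)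
    exact (tendsto_inv_atTop_zero.comp
      (tendsto_pow_atTop_atTop_of_one_lt (one_lt_two : (1:ℝ) < 2))).comp h1
  have hlo := (hs.div_const 2).const_sub (1/2)
  have hhi := (hm.const_add (1/2)).add hs
  rw [zero_div, sub_zero] at hlo
  rw [add_zero, add_zero] at hhi
  refine tendsto_of_tendsto_of_tendsto_of_le_of_le' hlo hhi ?_ ?_
  · filter_upwards [eventually_ge_atTop k] with n hn
    exact (main_bound hk hn hπ0 hπ1 _).1
  · filter_upwards [eventually_ge_atTop k] with n hn
    exact (main_bound hk hn hπ0 hπ1 _).2
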